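/- Let 0 < δ ≤ 2^{−1622} and let θ_1 be a real number such that q²‖qθ_1‖ ≥ δ for every positive integer q. Then there exists a real number θ_2 such that for all integers A, B with max(|A|, |B|) > 0 one has ‖Aθ_1 − Bθ_2‖ · max(A², B²) ≥ δ; consequently inf_{q ∈ ℤ_{>0}} q^{1/2} max(‖qθ_1‖, ‖qθ_2‖) > 0. -/

import Mathlib

open Filter

/-- Distance from a real number to the nearest integer. -/
noncomputable def nint (x : ℝ) : ℝ := |x - round x|

open Classical in
/-- The surviving nodes of level `n` in an `R`-ary tree whose nodes of level `n` are numbered by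
natural numbers, a node `a` of level `n + 1` being a child of `a / R`, after the removal of all
nodes `a` of level `n + 1` such that `Bad n k a` for some `k ≤ n`. -/
noncomputable def survivors (R : ℕ) (Bad : ℕ → ℕ → ℕ → Prop) : ℕ → Finset ℕ
  | 0 => {0}
  | n + 1 => ((survivors R Bad n).biUnion fun b => Finset.Ico (b * R) ((b + 1) * R)).filter
      fun a => ∀ k ≤ n, ¬ Bad n k a

lemma mem_survivors_succ {R : ℕ} (hR : 0 < R) {Bad : ℕ → ℕ → ℕ → Prop} {n a : ℕ} :
    a ∈ survivors R Bad (n + 1) ↔ a / R ∈ survivors R Bad n ∧ ∀ k ≤ n, ¬ Bad n k a := by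
  simp only [survivors, Finset.mem_filter, Finset.mem_biUnion, Finset.mem_Ico]
  refine and_congr_left fun _ => ⟨?_, fun h => ⟨_, h, Nat.div_mul_le_self a R, ?_⟩⟩
  · rintro ⟨b, hb, h1, h2⟩
    have : a / R = b := Nat.div_eq_of_lt_le h1 h2
    rwa [this]
  · rw [mul_comm]
    exact Nat.lt_mul_div_succ a hR

lemma div_pow_mem_survivors {R : ℕ} (hR : 0 < R) {Bad : ℕ → ℕ → ℕ → Prop} {j b : ℕ} (i : ℕ)
    (hb : b ∈ survivors R Bad (j + i)) : b / R ^ i ∈ survivors R Bad j := by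
  induction i generalizing b with
  | zero => simpa using hb
  | succ i ih =>
    have h := ih ((mem_survivors_succ hR).1 hb).1
    rwa [Nat.div_div_eq_div_mul, ← pow_succ'] at h

open Classical in
/-- Few bad descendants of each surviving node imply growth of the number of survivors. -/
lemma card_survivors_growth {R : ℕ} (hR : 0 < R) {Bad : ℕ → ℕ → ℕ → Prop} {M : ℕ → ℝ}
    (hM : ∀ m k, ∀ b ∈ survivors R Bad m,
      (((Finset.Ico (b * R ^ (k + 1)) ((b + 1) * R ^ (k + 1))).filter
        fun a => Bad (m + k) k a).card : ℝ) ≤ M k)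
    (hsum : ∀ n, ∑ k ∈ Finset.range (n + 1), M k * (2 / R) ^ k ≤ R / 2) (n : ℕ) :
    (R / 2 : ℝ) * (survivors R Bad n).card ≤ (survivors R Bad (n + 1)).card := by
  have hR' : (0 : ℝ) < R := by exact_mod_cast hR
  have hM0 : ∀ k, 0 ≤ M k := fun k =>
    le_trans (Nat.cast_nonneg _) (hM 0 k 0 (by simp [survivors]))
  induction n using Nat.strong_induction_on with
  | _ n ih =>
  set S := survivors R Bad with hS
  have hanc : ∀ k ≤ n, ((S (n - k)).card : ℝ) ≤ (2 / R) ^ k * (S n).card := by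
    intro k
    induction k with
    | zero => intro _; simp
    | succ k ihk =>
      intro hk
      have h1 := ih (n - (k + 1)) (by omega)
      have e : n - (k + 1) + 1 = n - k := by omega
      rw [e] at h1
      have h2 := ihk (by omega)
      calc ((S (n - (k + 1))).card : ℝ)
          = (2 / R) * ((R / 2) * (S (n - (k + 1))).card) := by field_simp
        _ ≤ (2 / R) * ((2 / R) ^ k * (S n).card) :=
            mul_le_mul_of_nonneg_left (h1.trans h2) (by positivity)
        _ = _ := by ring
  set X := (S n).biUnion fun b => Finset.Ico (b * R) ((b + 1) * R) with hX
  have hXcard : X.card = (S n).card * R := by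
    rw [hX, Finset.card_biUnion]
    · simp [add_mul]
    · intro x _ y _ hxy
      rw [Function.onFun, Finset.disjoint_left]
      intro a ha hb
      rw [Finset.mem_Ico] at ha hb
      exact hxy ((Nat.div_eq_of_lt_le ha.1 ha.2).symm.trans (Nat.div_eq_of_lt_le hb.1 hb.2))
  have hmemX : ∀ a, a ∈ X → a / R ∈ S n := by
    intro a ha
    simp only [hX, Finset.mem_biUnion, Finset.mem_Ico] at ha
    obtain ⟨b, hb, h1, h2⟩ := ha
    rwa [Nat.div_eq_of_lt_le h1 h2]
  have hcover : X ⊆ S (n + 1) ∪ (Finset.range (n + 1)).biUnion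
      fun k => (S (n - k)).biUnion fun b =>
        (Finset.Ico (b * R ^ (k + 1)) ((b + 1) * R ^ (k + 1))).filter fun a => Bad n k a := by
    intro a ha
    have ha' := hmemX a ha
    by_cases hbad : ∀ k ≤ n, ¬ Bad n k a
    · exact Finset.mem_union_left _ ((mem_survivors_succ hR).2 ⟨ha', hbad⟩)
    · push Not at hbad
      obtain ⟨k, hk, hb⟩ := hbad
      refine Finset.mem_union_right _ ?_
      simp only [Finset.mem_biUnion, Finset.mem_range, Finset.mem_filter, Finset.mem_Ico]
      have e : n = n - k + k := by omega
      rw [e] at ha'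
      have h := div_pow_mem_survivors hR k ha'
      rw [Nat.div_div_eq_div_mul, ← pow_succ'] at h
      refine ⟨k, by omega, _, h, ⟨Nat.div_mul_le_self _ _, ?_⟩, hb⟩
      rw [mul_comm]
      exact Nat.lt_mul_div_succ a (by positivity)
  have hcount : ((S n).card * R : ℝ) ≤ (S (n + 1)).card +
      ∑ k ∈ Finset.range (n + 1), (S (n - k)).card * M k := by
    have h1 : ((S n).card * R : ℝ) = X.card := by rw [hXcard]; push_cast; ring
    rw [h1]
    refine le_trans (Nat.cast_le.2 ((Finset.card_le_card hcover).trans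
      (Finset.card_union_le _ _))) ?_
    push_cast
    gcongr
    refine le_trans (Nat.cast_le.2 Finset.card_biUnion_le) ?_
    push_cast
    refine Finset.sum_le_sum fun k hk => ?_
    refine le_trans (Nat.cast_le.2 Finset.card_biUnion_le) ?_
    push_cast
    rw [← nsmul_eq_mul]
    refine Finset.sum_le_card_nsmul _ _ _ fun b hb => ?_
    have h := hM (n - k) k b hb
    have e : n - k + k = n := by have := Finset.mem_range.1 hk; omega
    rwa [e] at h
  have hsum' : ∑ k ∈ Finset.range (n + 1), ((S (n - k)).card : ℝ) * M k ≤
      R / 2 * (S n).card := by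
    calc ∑ k ∈ Finset.range (n + 1), ((S (n - k)).card : ℝ) * M k
        ≤ ∑ k ∈ Finset.range (n + 1), (M k * (2 / R) ^ k) * (S n).card := by
          refine Finset.sum_le_sum fun k hk => ?_
          have := mul_le_mul_of_nonneg_right
            (hanc k (by have := Finset.mem_range.1 hk; omega)) (hM0 k)
          linarith
      _ = (∑ k ∈ Finset.range (n + 1), M k * (2 / R) ^ k) * (S n).card := by
          rw [Finset.sum_mul]
      _ ≤ _ := by gcongr; exact hsum n
  linarith

lemma survivors_nonempty {R : ℕ} (hR : 0 < R) {Bad : ℕ → ℕ → ℕ → Prop}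
    (h : ∀ n, (R / 2 : ℝ) * (survivors R Bad n).card ≤ (survivors R Bad (n + 1)).card) (n : ℕ) :
    (survivors R Bad n).Nonempty := by
  have hR' : (0 : ℝ) < R := by exact_mod_cast hR
  induction n with
  | zero => simp [survivors]
  | succ n ih =>
    have h1 : (0 : ℝ) < (survivors R Bad n).card := by exact_mod_cast ih.card_pos
    have h2 : (0 : ℝ) < (survivors R Bad (n + 1)).card := lt_of_lt_of_le (by positivity) (h n)
    exact Finset.card_pos.1 (by exact_mod_cast h2)

/-- A real number lying in a surviving interval of every level. -/
lemma exists_forall_mem_survivors {R : ℕ} (hR : 0 < R) {Bad : ℕ → ℕ → ℕ → Prop}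
    (h : ∀ n, (survivors R Bad n).Nonempty) :
    ∃ y : ℝ, ∀ n, ∃ b ∈ survivors R Bad n, |y - b / (R : ℝ) ^ n| ≤ 1 / (R : ℝ) ^ n := by
  have hR' : (0 : ℝ) < R := by exact_mod_cast hR
  let K : ℕ → Set ℝ := fun n => ⋃ b ∈ survivors R Bad n,
    Set.Icc ((b : ℝ) / (R : ℝ) ^ n) ((b + 1) / (R : ℝ) ^ n)
  have hK : ∀ n, IsCompact (K n) := fun n =>
    (survivors R Bad n).isCompact_biUnion fun b _ => isCompact_Icc
  obtain ⟨y, hy⟩ := IsCompact.nonempty_iInter_of_sequence_nonempty_isCompact_isClosed K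
    (by
      intro n x hx
      simp only [K, Set.mem_iUnion, Set.mem_Icc, exists_prop] at hx ⊢
      obtain ⟨a, ha, h1, h2⟩ := hx
      refine ⟨a / R, ((mem_survivors_succ hR).1 ha).1, le_trans ?_ h1, h2.trans ?_⟩
      · rw [div_le_div_iff₀ (by positivity) (by positivity), pow_succ]
        have : ((a / R : ℕ) : ℝ) * R ≤ a := by exact_mod_cast Nat.div_mul_le_self a R
        have hp : (0 : ℝ) < (R : ℝ) ^ n := by positivity
        nlinarith
      · rw [div_le_div_iff₀ (by positivity) (by positivity), pow_succ]
        have : (a + 1 : ℝ) ≤ R * ((a / R : ℕ) + 1) := by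
          exact_mod_cast Nat.lt_mul_div_succ a hR
        have hp : (0 : ℝ) < (R : ℝ) ^ n := by positivity
        nlinarith)
    (by
      intro n
      obtain ⟨b, hb⟩ := h n
      refine ⟨(b : ℝ) / (R : ℝ) ^ n, ?_⟩
      simp only [K, Set.mem_iUnion, Set.mem_Icc, exists_prop]
      exact ⟨b, hb, le_rfl, by gcongr; linarith⟩)
    (hK 0) (fun n => (hK n).isClosed)
  refine ⟨y, fun n => ?_⟩
  have := Set.mem_iInter.1 hy n
  simp only [K, Set.mem_iUnion, Set.mem_Icc, exists_prop] at this
  obtain ⟨b, hb, h1, h2⟩ := this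
  refine ⟨b, hb, ?_⟩
  rw [add_div] at h2
  rw [abs_le]
  constructor
  · have : (0 : ℝ) < 1 / (R : ℝ) ^ n := by positivity
    linarith
  · linarith

/-- A number close to a surviving node stays away from every number that is close to bad nodes. -/
lemma lt_abs_sub_of_mem_survivors {R : ℕ} (hR : 0 < R) {Bad : ℕ → ℕ → ℕ → Prop} {m n k b : ℕ}
    (hb : b ∈ survivors R Bad m) (hnm : n < m) (hk : k ≤ n) {y z : ℝ}
    (hy : |y - b / (R : ℝ) ^ m| ≤ 2 / (R : ℝ) ^ m)
    (hz : ∀ a : ℕ, |z - a / (R : ℝ) ^ (n + 1)| ≤ 4 / (R : ℝ) ^ (n + 1) → Bad n k a) :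
    1 / (R : ℝ) ^ (n + 1) < |y - z| := by
  have hR' : (0 : ℝ) < R := by exact_mod_cast hR
  have hR1 : (1 : ℝ) ≤ R := by exact_mod_cast hR
  obtain ⟨i, rfl⟩ : ∃ i, m = n + 1 + i := ⟨m - (n + 1), by omega⟩
  have ha := div_pow_mem_survivors hR i hb
  set a := b / R ^ i
  have hnb := ((mem_survivors_succ hR).1 ha).2 k hk
  have hfar := mt (hz a) hnb
  rw [not_le] at hfar
  have hU : (0 : ℝ) < (R : ℝ) ^ (n + 1) := by positivity
  have hV : (1 : ℝ) ≤ (R : ℝ) ^ i := one_le_pow₀ hR1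
  have h1 : (a : ℝ) * (R : ℝ) ^ i ≤ b := by exact_mod_cast Nat.div_mul_le_self b (R ^ i)
  have h2 : (b : ℝ) ≤ (R : ℝ) ^ i * (a + 1) := by
    exact_mod_cast (Nat.lt_mul_div_succ b (by positivity : 0 < R ^ i)).le
  have hb1 : |(b : ℝ) / (R : ℝ) ^ (n + 1 + i) - a / (R : ℝ) ^ (n + 1)| ≤ 1 / (R : ℝ) ^ (n + 1) := by
    have e : (b : ℝ) / (R : ℝ) ^ (n + 1 + i) - a / (R : ℝ) ^ (n + 1) =
        ((b - a * (R : ℝ) ^ i) / (R : ℝ) ^ i) / (R : ℝ) ^ (n + 1) := by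
      rw [pow_add]; field_simp
    rw [e, abs_div, abs_of_pos hU]
    gcongr
    rw [abs_div, abs_of_pos (by positivity : (0 : ℝ) < (R : ℝ) ^ i), div_le_one (by positivity),
      abs_le]
    constructor <;> linarith
  have hb2 : 2 / (R : ℝ) ^ (n + 1 + i) ≤ 2 / (R : ℝ) ^ (n + 1) :=
    div_le_div_of_nonneg_left (by norm_num) hU (pow_le_pow_right₀ hR1 (by omega))
  have e3 : (4 : ℝ) / (R : ℝ) ^ (n + 1) = 4 * (1 / (R : ℝ) ^ (n + 1)) := by ring
  have e4 : (2 : ℝ) / (R : ℝ) ^ (n + 1) = 2 * (1 / (R : ℝ) ^ (n + 1)) := by ring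
  have t1 := abs_sub_le z y (a / (R : ℝ) ^ (n + 1))
  have t2 := abs_sub_le y (b / (R : ℝ) ^ (n + 1 + i)) (a / (R : ℝ) ^ (n + 1))
  rw [abs_sub_comm z y] at t1
  linarith

lemma card_le_of_cells {ι : Type*} [DecidableEq ι] {T : Finset ℕ} (c : ℕ → ι) (cells : Finset ι)
    (hmaps : ∀ a ∈ T, c a ∈ cells) (hclose : ∀ a ∈ T, ∀ a' ∈ T, c a = c a' → a ≤ a' + 8) :
    T.card ≤ 9 * cells.card := by
  refine Finset.card_le_mul_card_image_of_maps_to hmaps 9 fun i _ => ?_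
  rcases (T.filter fun a => c a = i).eq_empty_or_nonempty with h | h
  · simp [h]
  · set a₀ := (T.filter fun a => c a = i).min' h
    have h0 := Finset.mem_filter.1 (Finset.min'_mem _ h)
    have : (T.filter fun a => c a = i) ⊆ Finset.Icc a₀ (a₀ + 8) := by
      intro a ha
      have ha' := Finset.mem_filter.1 ha
      exact Finset.mem_Icc.2 ⟨Finset.min'_le _ _ ha,
        hclose a ha'.1 _ h0.1 (ha'.2.trans h0.2.symm)⟩
    refine (Finset.card_le_card this).trans ?_
    rw [Nat.card_Icc]
    omega

lemma le_add_eight_of_near {U z : ℝ} (hU : 0 < U) {a a' : ℕ} (h : |z - a / U| ≤ 4 / U)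
    (h' : |z - a' / U| ≤ 4 / U) : a ≤ a' + 8 := by
  rw [abs_le] at h h'
  have h3 : (a : ℝ) / U ≤ (a' + 8) / U := by
    have : ((a' : ℝ) + 8) / U = a' / U + 4 / U + 4 / U := by ring
    linarith [h.1, h'.2]
  have := (div_le_div_iff_of_pos_right hU).1 h3
  exact_mod_cast this

/-- A line `A x - B y + C = 0` of height class `(n, k)` meets the vertical line `x = θ` close to
the left endpoint of the `a`-th interval of level `n + 1`. -/
def BadLine (δ θ : ℝ) (n k a : ℕ) : Prop :=
  ∃ A B C : ℤ, 0 < B ∧ δ * 65536 ^ (n + 1) ≤ B * max |(A : ℝ)| B ^ 2 ∧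
    B * max |(A : ℝ)| B ^ 2 < δ * 65536 ^ (n + 2) ∧
    (16 ^ k) ^ 4 * (B : ℝ) ≤ max |(A : ℝ)| B ∧
    max |(A : ℝ)| B < 65536 * (16 ^ k) ^ 4 * B ∧
    |(A * θ + C) / B - a / 65536 ^ (n + 1)| ≤ 4 / 65536 ^ (n + 1)

/-- A rational point `(p / q, r / q)` of height class `n` that is close to the vertical line
`x = θ` has its ordinate close to the left endpoint of the `a`-th interval of level `n + 1`. -/
def BadPoint (δ θ : ℝ) (n a : ℕ) : Prop :=
  ∃ p r q : ℤ, 0 < q ∧ δ * 65536 ^ (2 * n + 2) ≤ (q : ℝ) ^ 3 ∧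
    (q : ℝ) ^ 3 < δ * 65536 ^ (2 * n + 4) ∧ q * (q * θ - p) ^ 2 < δ ∧
    |(r : ℝ) / q - a / 65536 ^ (n + 1)| ≤ 4 / 65536 ^ (n + 1)

/-- The nodes removed from the tree. -/
def Removed (δ θ : ℝ) (n k a : ℕ) : Prop := BadLine δ θ n k a ∨ k = 0 ∧ BadPoint δ θ n a

lemma exists_pow_class {c x R : ℝ} (hR : 1 < R) (hc : 0 < c) (h : c ≤ x) :
    ∃ n : ℕ, c * R ^ n ≤ x ∧ x < c * R ^ (n + 1) := by
  obtain ⟨n, h1, h2⟩ := exists_nat_pow_near ((one_le_div hc).2 h) hR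
  rw [le_div_iff₀ hc] at h1
  rw [div_lt_iff₀ hc] at h2
  exact ⟨n, by linarith, by linarith⟩

lemma le_line_of_pos_of_mem_survivors {δ θ : ℝ} (hδ0 : 0 < δ) (hδ : δ * 65536 ^ 12 ≤ 1) {m b : ℕ}
    (hb : b ∈ survivors 65536 (Removed δ θ) m) {y : ℝ}
    (hy : |y - b / 65536 ^ m| ≤ 2 / 65536 ^ m) {A B C : ℤ} (hB : 0 < B)
    (hm : B * max |(A : ℝ)| B ^ 2 < δ * 65536 ^ (m + 1)) :
    δ ≤ |A * θ - B * y + C| * max |(A : ℝ)| B ^ 2 := by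
  set H : ℝ := max |(A : ℝ)| B with hH
  have hB1 : (1 : ℝ) ≤ B := by exact_mod_cast hB
  have hHB : (B : ℝ) ≤ H := le_max_right _ _
  have hH1 : 1 ≤ H := hB1.trans hHB
  have hBH : 1 ≤ B * H ^ 2 := by nlinarith [one_le_pow₀ hH1 (n := 2)]
  obtain ⟨n, hn1, hn2⟩ := exists_pow_class (R := 65536) (c := δ * 65536) (x := B * H ^ 2)
    (by norm_num) (by positivity) (by linarith)
  obtain ⟨k, hk1, hk2⟩ := exists_pow_class (R := 65536) (c := (B : ℝ)) (x := H)
    (by norm_num) (by linarith) hHB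
  have hR1 : (1 : ℝ) < 65536 := by norm_num
  have e16 : ((16 : ℝ) ^ k) ^ 4 = 65536 ^ k := by rw [← pow_mul, mul_comm, pow_mul]; norm_num
  have hn1' : δ * 65536 ^ (n + 1) ≤ B * H ^ 2 := by rw [pow_succ]; linarith
  have hn2' : B * H ^ 2 < δ * 65536 ^ (n + 2) := by
    have : δ * 65536 * (65536 : ℝ) ^ (n + 1) = δ * 65536 ^ (n + 2) := by ring
    linarith
  have hnm : n < m := by
    have h := lt_of_mul_lt_mul_left (hn1'.trans_lt hm) hδ0.le
    have := (pow_lt_pow_iff_right₀ hR1).1 h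
    omega
  have hk0 : (65536 : ℝ) ^ k ≤ H := by
    have := one_le_pow₀ hR1.le (n := k)
    nlinarith
  have hkn : k ≤ n := by
    have h1 : (65536 : ℝ) ^ k < 65536 ^ n := by
      have : H ≤ B * H ^ 2 := by nlinarith
      have e : δ * (65536 : ℝ) ^ (n + 2) = (δ * 65536 ^ 2) * 65536 ^ n := by ring
      have : (0 : ℝ) < 65536 ^ n := by positivity
      nlinarith
    exact ((pow_lt_pow_iff_right₀ hR1).1 h1).le
  have key := lt_abs_sub_of_mem_survivors (by norm_num) hb hnm hkn (y := y)
    (z := (A * θ + C) / B) (by exact_mod_cast hy) (fun a ha => Or.inl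
      ⟨A, B, C, hB, hn1', hn2', by rw [e16]; linarith, by rw [e16]; rw [pow_succ] at hk2; linarith,
        by exact_mod_cast ha⟩)
  have e : A * θ - B * y + C = -(B * (y - (A * θ + C) / B)) := by
    field_simp; ring
  rw [e, abs_neg, abs_mul, abs_of_pos (by linarith : (0 : ℝ) < B)]
  have hU : (0 : ℝ) < 65536 ^ (n + 1) := by positivity
  push_cast at key
  rw [div_lt_iff₀ hU] at key
  have hz := abs_nonneg (y - (A * θ + C) / B)
  set z := |y - (A * θ + C) / B|
  nlinarith

lemma le_line_of_mem_survivors {δ θ : ℝ} (hδ0 : 0 < δ) (hδ : δ * 65536 ^ 12 ≤ 1) {m b : ℕ}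
    (hb : b ∈ survivors 65536 (Removed δ θ) m) {y : ℝ}
    (hy : |y - b / 65536 ^ m| ≤ 2 / 65536 ^ m) {A B C : ℤ} (hB : B ≠ 0)
    (hm : |(B : ℝ)| * max |(A : ℝ)| |(B : ℝ)| ^ 2 < δ * 65536 ^ (m + 1)) :
    δ ≤ |A * θ - B * y + C| * max |(A : ℝ)| |(B : ℝ)| ^ 2 := by
  rcases lt_or_gt_of_ne hB with h | h
  · have h' : (B : ℝ) < 0 := by exact_mod_cast h
    rw [abs_of_neg h'] at hm ⊢
    have := le_line_of_pos_of_mem_survivors hδ0 hδ hb hy (A := -A) (B := -B) (C := -C) (by omega)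
      (by push_cast; rwa [abs_neg])
    push_cast at this
    rw [abs_neg] at this
    rw [← abs_neg]
    convert this using 3
    ring
  · have h' : (0 : ℝ) < B := by exact_mod_cast h
    rw [abs_of_pos h'] at hm ⊢
    exact le_line_of_pos_of_mem_survivors hδ0 hδ hb hy h hm

lemma le_point_of_pos_of_mem_survivors {δ θ : ℝ} (hδ0 : 0 < δ) (hδ : δ * 65536 ^ 12 ≤ 1) {m b : ℕ}
    (hb : b ∈ survivors 65536 (Removed δ θ) m) {y : ℝ}
    (hy : |y - b / 65536 ^ m| ≤ 2 / 65536 ^ m) {p r q : ℤ} (hq : 0 < q)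
    (hm : (q : ℝ) ^ 3 < δ * 65536 ^ (2 * m + 2)) (hp : q * (q * θ - p) ^ 2 < δ) :
    δ ≤ q * (q * y - r) ^ 2 := by
  have hq1 : (1 : ℝ) ≤ q := by exact_mod_cast hq
  have hq3 : (1 : ℝ) ≤ (q : ℝ) ^ 3 := one_le_pow₀ hq1
  obtain ⟨n, hn1, hn2⟩ := exists_pow_class (R := 65536 ^ 2) (c := δ * 65536 ^ 2)
    (x := (q : ℝ) ^ 3) (by norm_num) (by positivity) (by linarith)
  have e1 : δ * 65536 ^ 2 * ((65536 : ℝ) ^ 2) ^ n = δ * 65536 ^ (2 * n + 2) := by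
    rw [← pow_mul]; ring
  have e2 : δ * 65536 ^ 2 * ((65536 : ℝ) ^ 2) ^ (n + 1) = δ * 65536 ^ (2 * n + 4) := by
    rw [← pow_mul]; ring
  rw [e1] at hn1
  rw [e2] at hn2
  have hnm : n < m := by
    have h := lt_of_mul_lt_mul_left (hn1.trans_lt hm) hδ0.le
    have := (pow_lt_pow_iff_right₀ (by norm_num : (1 : ℝ) < 65536)).1 h
    omega
  have key := lt_abs_sub_of_mem_survivors (by norm_num) hb hnm (Nat.zero_le n) (y := y)
    (z := (r : ℝ) / q) (by exact_mod_cast hy)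
    (fun a ha => Or.inr ⟨rfl, p, r, q, hq, hn1, hn2, hp, by exact_mod_cast ha⟩)
  have hU : (0 : ℝ) < 65536 ^ (n + 1) := by positivity
  push_cast at key
  rw [div_lt_iff₀ hU] at key
  have e : q * y - r = q * (y - r / q) := by field_simp
  rw [e, mul_pow, ← sq_abs (y - r / q)]
  have hz := abs_nonneg (y - r / q)
  set z := |y - r / q|
  have h1 : 1 ≤ (z * 65536 ^ (n + 1)) ^ 2 := one_le_pow₀ key.le
  have e3 : (z * (65536 : ℝ) ^ (n + 1)) ^ 2 = z ^ 2 * 65536 ^ (2 * n + 2) := by ring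
  rw [e3] at h1
  calc δ ≤ δ * (z ^ 2 * 65536 ^ (2 * n + 2)) := le_mul_of_one_le_right hδ0.le h1
    _ = (δ * 65536 ^ (2 * n + 2)) * z ^ 2 := by ring
    _ ≤ (q : ℝ) ^ 3 * z ^ 2 := by gcongr
    _ = _ := by ring

lemma le_point_of_mem_survivors {δ θ : ℝ} (hδ0 : 0 < δ) (hδ : δ * 65536 ^ 12 ≤ 1) {m b : ℕ}
    (hb : b ∈ survivors 65536 (Removed δ θ) m) {y : ℝ}
    (hy : |y - b / 65536 ^ m| ≤ 2 / 65536 ^ m) {p r q : ℤ} (hq : q ≠ 0)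
    (hm : |(q : ℝ)| ^ 3 < δ * 65536 ^ (2 * m + 2)) (hp : |(q : ℝ)| * (q * θ - p) ^ 2 < δ) :
    δ ≤ |(q : ℝ)| * (q * y - r) ^ 2 := by
  rcases lt_or_gt_of_ne hq with h | h
  · have h' : (q : ℝ) < 0 := by exact_mod_cast h
    rw [abs_of_neg h'] at hm hp ⊢
    have := le_point_of_pos_of_mem_survivors hδ0 hδ hb hy (p := -p) (r := -r) (q := -q) (by omega)
      (by push_cast; exact hm) (by push_cast; convert hp using 2; ring)
    push_cast at this
    convert this using 2
    ring
  · have h' : (0 : ℝ) < q := by exact_mod_cast h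
    rw [abs_of_pos h'] at hm hp ⊢
    exact le_point_of_pos_of_mem_survivors hδ0 hδ hb hy h hm hp

lemma lt_mul_of_pow_three_lt {x y R : ℝ} (hR : 1 ≤ R) (hy : 0 ≤ y)
    (h : x ^ 3 < R ^ 2 * y ^ 3) : x < R * y := by
  refine lt_of_pow_lt_pow_left₀ 3 (by positivity) (h.trans_le ?_)
  rw [mul_pow]
  gcongr
  norm_num

/-- Two distinct ordinates of dangerous points of the same class near a surviving interval are
separated. -/
lemma point_gap {δ θ : ℝ} (hδ0 : 0 < δ) (hδ : δ * 65536 ^ 12 ≤ 1)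
    (hθ : ∀ A C : ℤ, A ≠ 0 → δ ≤ |A * θ + C| * (A : ℝ) ^ 2) {n b : ℕ}
    (hb : b ∈ survivors 65536 (Removed δ θ) n) {p₁ r₁ q₁ p₂ r₂ q₂ : ℤ}
    (hq₁ : 0 < q₁) (hq₂ : 0 < q₂)
    (hl₁ : δ * 65536 ^ (2 * n + 2) ≤ (q₁ : ℝ) ^ 3) (hu₁ : (q₁ : ℝ) ^ 3 < δ * 65536 ^ (2 * n + 4))
    (hl₂ : δ * 65536 ^ (2 * n + 2) ≤ (q₂ : ℝ) ^ 3) (hu₂ : (q₂ : ℝ) ^ 3 < δ * 65536 ^ (2 * n + 4))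
    (hs₁ : q₁ * (q₁ * θ - p₁) ^ 2 < δ) (hs₂ : q₂ * (q₂ * θ - p₂) ^ 2 < δ)
    (hy : |(r₁ : ℝ) / q₁ - b / 65536 ^ n| ≤ 2 / 65536 ^ n)
    (hne : (r₁ : ℝ) / q₁ ≠ r₂ / q₂) :
    1024 / 65536 ^ (n + 1) ≤ |(r₁ : ℝ) / q₁ - r₂ / q₂| := by
  by_contra! hlt
  have hq₁' : (0 : ℝ) < q₁ := by exact_mod_cast hq₁
  have hq₂' : (0 : ℝ) < q₂ := by exact_mod_cast hq₂
  have eN1 : ∀ j, (65536 : ℝ) ^ (2 * n + j) = (65536 ^ n) ^ 2 * 65536 ^ j := fun j => by ring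
  have eN2 : (65536 : ℝ) ^ (n + 1) = 65536 ^ n * 65536 := pow_succ _ _
  have hclass := fun {A B C : ℤ} => le_line_of_mem_survivors hδ0 hδ hb hy (A := A) (B := B) (C := C)
  rw [eN2] at hlt hclass
  rw [eN1] at hl₁ hu₁ hl₂ hu₂
  have hN : (0 : ℝ) < 65536 ^ n := by positivity
  clear hy hb
  set N : ℝ := 65536 ^ n
  clear_value N
  set A : ℤ := r₁ * q₂ - q₁ * r₂ with hA
  set B : ℤ := p₁ * q₂ - q₁ * p₂ with hB
  set C : ℤ := p₁ * r₂ - r₁ * p₂ with hC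
  have hqq : (q₂ : ℝ) < 65536 * q₁ := lt_mul_of_pow_three_lt (by norm_num) hq₁'.le (by linarith)
  have hqq' : (q₁ : ℝ) < 65536 * q₂ := lt_mul_of_pow_three_lt (by norm_num) hq₂'.le (by linarith)
  have hAy : (A : ℝ) = q₁ * q₂ * (r₁ / q₁ - r₂ / q₂) := by
    rw [hA]; push_cast; field_simp
  have hA0 : A ≠ 0 := by
    intro h
    rw [h, Int.cast_zero] at hAy
    have := mul_ne_zero (mul_pos hq₁' hq₂').ne' (sub_ne_zero.2 hne)
    exact this hAy.symm
  set T : ℝ := 2 ^ 20 * 65536 ^ 4 * δ * q₁ with hT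
  have hT0 : 0 < T := by positivity
  have hAT : (A : ℝ) ^ 2 ≤ T := by
    rw [hAy, mul_pow, ← sq_abs ((r₁ : ℝ) / q₁ - r₂ / q₂)]
    have h1 : |(r₁ : ℝ) / q₁ - r₂ / q₂| ^ 2 ≤ (1024 / (N * 65536)) ^ 2 := by gcongr
    calc ((q₁ : ℝ) * q₂) ^ 2 * |(r₁ : ℝ) / q₁ - r₂ / q₂| ^ 2
        ≤ (q₁ * (65536 * q₁)) ^ 2 * (1024 / (N * 65536)) ^ 2 := by gcongr
      _ = 2 ^ 20 * q₁ * (q₁ : ℝ) ^ 3 / N ^ 2 := by field_simp; ring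
      _ ≤ 2 ^ 20 * q₁ * (δ * (N ^ 2 * 65536 ^ 4)) / N ^ 2 := by gcongr
      _ = T := by rw [hT]; field_simp
  have hBT : (B : ℝ) ^ 2 ≤ T := by
    have e : (B : ℝ) = q₁ * (q₂ * θ - p₂) - q₂ * (q₁ * θ - p₁) := by
      rw [hB]; push_cast; ring
    set u₁ := q₁ * θ - p₁
    set u₂ := q₂ * θ - p₂
    have h1 : (q₁ : ℝ) ^ 2 * u₂ ^ 2 ≤ q₁ * 65536 * δ := by
      calc (q₁ : ℝ) ^ 2 * u₂ ^ 2 = q₁ * (q₁ * u₂ ^ 2) := by ring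
        _ ≤ q₁ * (65536 * q₂ * u₂ ^ 2) := by gcongr
        _ = q₁ * 65536 * (q₂ * u₂ ^ 2) := by ring
        _ ≤ _ := by gcongr
    have h2 : (q₂ : ℝ) ^ 2 * u₁ ^ 2 ≤ 65536 ^ 2 * q₁ * δ := by
      calc (q₂ : ℝ) ^ 2 * u₁ ^ 2 ≤ (65536 * q₁) ^ 2 * u₁ ^ 2 := by gcongr
        _ = 65536 ^ 2 * q₁ * (q₁ * u₁ ^ 2) := by ring
        _ ≤ _ := by gcongr
    have h3 : (B : ℝ) ^ 2 ≤ 2 * (q₁ ^ 2 * u₂ ^ 2) + 2 * (q₂ ^ 2 * u₁ ^ 2) := by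
      rw [e]; nlinarith [sq_nonneg (q₁ * u₂ + q₂ * u₁)]
    have h4 : 0 < δ * q₁ := by positivity
    rw [hT]
    nlinarith
  have hF : ∀ x : ℝ, (q₁ : ℝ) * x = A * (q₁ * θ - p₁) → ∀ h : ℝ, 0 ≤ h → h ≤ T → |x| * h < δ := by
    intro x hx h h0 hh
    refine lt_of_pow_lt_pow_left₀ 2 hδ0.le ?_
    rw [mul_pow, sq_abs]
    have h1 : x ^ 2 = (A : ℝ) ^ 2 * (q₁ * (q₁ * θ - p₁) ^ 2) / q₁ ^ 3 := by
      rw [eq_div_iff (by positivity)]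
      linear_combination (q₁ : ℝ) * (q₁ * x + A * (q₁ * θ - p₁)) * hx
    calc x ^ 2 * h ^ 2 ≤ (T * δ / q₁ ^ 3) * T ^ 2 := by rw [h1]; gcongr
      _ = 2 ^ 60 * 65536 ^ 12 * δ ^ 2 * δ ^ 2 := by rw [hT]; field_simp
      _ < 1 * δ ^ 2 := by
        gcongr
        nlinarith
      _ = δ ^ 2 := one_mul _
  by_cases hB0 : B = 0
  · have h := hθ A C hA0
    refine absurd h (not_le.2 (hF _ ?_ _ (sq_nonneg _) hAT))
    have : (B : ℝ) * r₁ = 0 := by rw [hB0]; simp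
    have e : (A : ℝ) * p₁ - B * r₁ + C * q₁ = 0 := by
      rw [hA, hB, hC]; push_cast; ring
    linear_combination e + this
  · have hHT : max |(A : ℝ)| |(B : ℝ)| ^ 2 ≤ T := by
      rcases max_choice |(A : ℝ)| |(B : ℝ)| with h | h <;> rw [h, sq_abs] <;> assumption
    have hBT' : |(B : ℝ)| * max |(A : ℝ)| |(B : ℝ)| ^ 2 < δ * (N * 65536) := by
      refine lt_of_pow_lt_pow_left₀ 2 (by positivity) ?_
      rw [mul_pow, sq_abs]
      calc (B : ℝ) ^ 2 * (max |(A : ℝ)| |(B : ℝ)| ^ 2) ^ 2 ≤ T * T ^ 2 := by gcongr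
        _ = 2 ^ 60 * 65536 ^ 12 * δ ^ 3 * (q₁ : ℝ) ^ 3 := by rw [hT]; ring
        _ ≤ 2 ^ 60 * 65536 ^ 12 * δ ^ 3 * (δ * (N ^ 2 * 65536 ^ 4)) := by gcongr
        _ = (2 ^ 60 * 65536 ^ 14 * δ ^ 2) * (δ * (N * 65536)) ^ 2 := by ring
        _ < 1 * (δ * (N * 65536)) ^ 2 := by
          gcongr
          nlinarith
        _ = _ := one_mul _
    refine absurd (hclass hB0 hBT' (C := C)) (not_le.2 (hF _ ?_ _ (sq_nonneg _) hHT))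
    have e : (A : ℝ) * p₁ - B * r₁ + C * q₁ = 0 := by
      rw [hA, hB, hC]; push_cast; ring
    have e2 : (q₁ : ℝ) * (r₁ / q₁) = r₁ := by field_simp
    linear_combination e - B * e2

/-- Two dangerous lines of the same class near a surviving interval meet the vertical line in
separated points, unless their slopes are separated. -/
lemma line_gap {δ θ : ℝ} (hδ0 : 0 < δ) (hδ : δ * 65536 ^ 12 ≤ 1) {m k b : ℕ}
    (hb : b ∈ survivors 65536 (Removed δ θ) m) {A₁ B₁ C₁ A₂ B₂ C₂ : ℤ}
    (hB₁ : 0 < B₁) (hB₂ : 0 < B₂) {H₁ H₂ : ℝ} (hAH₁ : |(A₁ : ℝ)| ≤ H₁)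
    (hl₁ : δ * 65536 ^ (m + k + 1) ≤ B₁ * H₁ ^ 2) (hu₁ : B₁ * H₁ ^ 2 < δ * 65536 ^ (m + k + 2))
    (hu₂ : B₂ * H₂ ^ 2 < δ * 65536 ^ (m + k + 2))
    (hk₁ : (16 ^ k) ^ 4 * (B₁ : ℝ) ≤ H₁) (hk₁' : H₁ < 65536 * (16 ^ k) ^ 4 * B₁)
    (hk₂ : (16 ^ k) ^ 4 * (B₂ : ℝ) ≤ H₂) (hk₂' : H₂ < 65536 * (16 ^ k) ^ 4 * B₂)
    (hy₁ : |(A₁ * θ + C₁) / B₁ - b / 65536 ^ m| ≤ 2 / 65536 ^ m)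
    (hy₂ : |(A₂ * θ + C₂) / B₂ - b / 65536 ^ m| ≤ 2 / 65536 ^ m)
    (hne : (A₁ * θ + C₁) / B₁ ≠ (A₂ * θ + C₂) / B₂) :
    1 / (65536 ^ m * 16 ^ k) ≤ |(A₁ * θ + C₁) / B₁ - (A₂ * θ + C₂) / B₂| ∨
      65536 * (16 ^ k) ^ 2 ≤ |(A₁ : ℝ) / B₁ - A₂ / B₂| := by
  have hB₁' : (0 : ℝ) < B₁ := by exact_mod_cast hB₁
  have hB₂' : (0 : ℝ) < B₂ := by exact_mod_cast hB₂
  have hone₁ : (1 : ℝ) ≤ B₁ := by exact_mod_cast hB₁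
  have hone₂ : (1 : ℝ) ≤ B₂ := by exact_mod_cast hB₂
  have e16 : (65536 : ℝ) ^ k = (16 ^ k) ^ 4 := by rw [← pow_mul, mul_comm, pow_mul]; norm_num
  have eN1 : ∀ j, (65536 : ℝ) ^ (m + k + j) = 65536 ^ m * (16 ^ k) ^ 4 * 65536 ^ j := fun j => by
    rw [pow_add, pow_add, e16]
  have eN2 : (65536 : ℝ) ^ (2 * m + 2) = (65536 ^ m) ^ 2 * 65536 ^ 2 := by ring
  have hD : |(A₁ * θ + C₁) / B₁ - (A₂ * θ + C₂) / B₂| ≤ 4 / 65536 ^ m := by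
    have h := abs_sub_le ((A₁ * θ + C₁) / B₁) ((b : ℝ) / 65536 ^ m) ((A₂ * θ + C₂) / B₂)
    rw [abs_sub_comm ((b : ℝ) / 65536 ^ m)] at h
    have e : (4 : ℝ) / 65536 ^ m = 2 / 65536 ^ m + 2 / 65536 ^ m := by ring
    linarith
  have hclass := fun {p r q : ℤ} =>
    le_point_of_mem_survivors hδ0 hδ hb hy₁ (p := p) (r := r) (q := q)
  rw [eN2] at hclass
  rw [eN1] at hl₁ hu₁ hu₂
  have hN : (1 : ℝ) ≤ 65536 ^ m := one_le_pow₀ (by norm_num)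
  have hx : (1 : ℝ) ≤ 16 ^ k := one_le_pow₀ (by norm_num)
  clear hy₁ hy₂ hb
  set N : ℝ := 65536 ^ m
  clear_value N
  set x : ℝ := 16 ^ k
  clear_value x
  set y₁ := (A₁ * θ + C₁) / B₁ with hy₁
  set y₂ := (A₂ * θ + C₂) / B₂ with hy₂
  have hN0 : 0 < N := by linarith
  have hx0 : 0 < x := by linarith
  have hH₁0 : 0 < H₁ := lt_of_lt_of_le (by positivity) hk₁
  have hH₂0 : 0 < H₂ := lt_of_lt_of_le (by positivity) hk₂
  have hc₁ : H₁ ^ 3 < δ * N * x ^ 8 * 65536 ^ 3 := by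
    calc H₁ ^ 3 = H₁ * H₁ ^ 2 := by ring
      _ ≤ (65536 * x ^ 4 * B₁) * H₁ ^ 2 := by gcongr
      _ = 65536 * x ^ 4 * (B₁ * H₁ ^ 2) := by ring
      _ < 65536 * x ^ 4 * (δ * (N * x ^ 4 * 65536 ^ 2)) := by gcongr
      _ = _ := by ring
  have hc₂ : H₂ ^ 3 < δ * N * x ^ 8 * 65536 ^ 3 := by
    calc H₂ ^ 3 = H₂ * H₂ ^ 2 := by ring
      _ ≤ (65536 * x ^ 4 * B₂) * H₂ ^ 2 := by gcongr
      _ = 65536 * x ^ 4 * (B₂ * H₂ ^ 2) := by ring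
      _ < 65536 * x ^ 4 * (δ * (N * x ^ 4 * 65536 ^ 2)) := by gcongr
      _ = _ := by ring
  have hd₁ : δ * N * x ^ 8 * 65536 ≤ H₁ ^ 3 := by
    calc δ * N * x ^ 8 * 65536 = x ^ 4 * (δ * (N * x ^ 4 * 65536 ^ 1)) := by ring
      _ ≤ x ^ 4 * (B₁ * H₁ ^ 2) := by gcongr
      _ = (x ^ 4 * B₁) * H₁ ^ 2 := by ring
      _ ≤ H₁ * H₁ ^ 2 := by gcongr
      _ = _ := by ring
  have hHH : H₂ < 65536 * H₁ := lt_mul_of_pow_three_lt (by norm_num) hH₁0.le (by linarith)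
  have hBsmall : ∀ B H : ℝ, 1 ≤ B → x ^ 4 * B ≤ H → H ^ 3 < δ * N * x ^ 8 * 65536 ^ 3 →
      B ^ 2 < δ * N * 65536 ^ 3 := by
    intro B H hB hk hc
    have h1 : (x ^ 4 * B) ^ 3 < δ * N * x ^ 8 * 65536 ^ 3 :=
      lt_of_le_of_lt (pow_le_pow_left₀ (by positivity) hk 3) hc
    have h2 : B ^ 2 * x ^ 8 < (δ * N * 65536 ^ 3) * x ^ 8 := by
      calc B ^ 2 * x ^ 8 ≤ B ^ 3 * x ^ 12 := by
            gcongr <;> norm_num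
        _ = (x ^ 4 * B) ^ 3 := by ring
        _ < _ := by linarith
    exact lt_of_mul_lt_mul_right h2 (by positivity)
  have hBB : 4 * (B₁ * B₂ : ℝ) < N := by
    have h1 := hBsmall _ _ hone₁ hk₁ hc₁
    have h2 := hBsmall _ _ hone₂ hk₂ hc₂
    have h3 : (B₁ * B₂ : ℝ) < δ * N * 65536 ^ 3 := by
      nlinarith [sq_nonneg ((B₁ : ℝ) - B₂)]
    nlinarith
  set p : ℤ := C₂ * B₁ - C₁ * B₂ with hp
  set r : ℤ := A₁ * C₂ - A₂ * C₁ with hr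
  set q : ℤ := A₁ * B₂ - A₂ * B₁ with hq
  have e₁ : (B₁ : ℝ) * y₁ = A₁ * θ + C₁ := by rw [hy₁]; field_simp
  have e₂ : (B₂ : ℝ) * y₂ = A₂ * θ + C₂ := by rw [hy₂]; field_simp
  have hqθ : q * θ - p = B₁ * B₂ * (y₁ - y₂) := by
    rw [hq, hp]; push_cast
    linear_combination (-B₂ : ℝ) * e₁ + B₁ * e₂
  have hqy : q * y₁ - r = A₁ * B₂ * (y₁ - y₂) := by
    rw [hq, hr]; push_cast
    linear_combination (-A₂ : ℝ) * e₁ + A₁ * e₂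
  have hDpos : 0 < |y₁ - y₂| := abs_pos.2 (sub_ne_zero.2 hne)
  have hq0 : q ≠ 0 := by
    intro h
    rw [h, Int.cast_zero, zero_mul, zero_sub] at hqθ
    have h1 : |(p : ℝ)| < 1 := by
      rw [← abs_neg, hqθ, abs_mul, abs_of_pos (by positivity : (0 : ℝ) < B₁ * B₂)]
      calc (B₁ * B₂ : ℝ) * |y₁ - y₂| ≤ B₁ * B₂ * (4 / N) := by gcongr
        _ = 4 * (B₁ * B₂) / N := by ring
        _ < 1 := by rwa [div_lt_one hN0]
    have h2 : p = 0 := Int.abs_lt_one_iff.1 (by exact_mod_cast h1)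
    rw [h2, Int.cast_zero, neg_zero] at hqθ
    exact mul_ne_zero (mul_pos hB₁' hB₂').ne' (sub_ne_zero.2 hne) hqθ.symm
  have hqpos : 0 < |(q : ℝ)| := abs_pos.2 (by exact_mod_cast hq0)
  have hHmax : H₁ ^ 4 * H₂ ^ 2 ≤ (δ * N * x ^ 8 * 65536 ^ 3) ^ 2 := by
    have hM : max H₁ H₂ ^ 3 ≤ δ * N * x ^ 8 * 65536 ^ 3 := by
      rcases max_choice H₁ H₂ with h | h <;> rw [h]
      exacts [hc₁.le, hc₂.le]
    calc H₁ ^ 4 * H₂ ^ 2 ≤ max H₁ H₂ ^ 4 * max H₁ H₂ ^ 2 := by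
          gcongr
          · exact le_max_left _ _
          · exact le_max_right _ _
      _ = (max H₁ H₂ ^ 3) ^ 2 := by ring
      _ ≤ _ := by gcongr
  rcases lt_or_ge (|(q : ℝ)| * x ^ 6) (65536 ^ 2 * H₁ ^ 2) with hcase | hcase
  · left
    have h1 : |(q : ℝ)| ^ 3 < δ * (N ^ 2 * 65536 ^ 2) := by
      have h : |(q : ℝ)| ^ 3 * x ^ 18 < (δ * (N ^ 2 * 65536 ^ 2)) * x ^ 18 := by
        calc |(q : ℝ)| ^ 3 * x ^ 18 = (|(q : ℝ)| * x ^ 6) ^ 3 := by ring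
          _ < (65536 ^ 2 * H₁ ^ 2) ^ 3 := by gcongr
          _ = 65536 ^ 6 * (H₁ ^ 3) ^ 2 := by ring
          _ ≤ 65536 ^ 6 * (δ * N * x ^ 8 * 65536 ^ 3) ^ 2 := by gcongr
          _ = (δ * 65536 ^ 10) * (δ * (N ^ 2 * 65536 ^ 2) * x ^ 16) := by ring
          _ ≤ 1 * (δ * (N ^ 2 * 65536 ^ 2) * x ^ 18) := by
            gcongr
            · linarith
            · norm_num
          _ = _ := one_mul _
      exact lt_of_mul_lt_mul_right h (by positivity)
    have h2 : |(q : ℝ)| * (q * θ - p) ^ 2 < δ := by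
      rw [hqθ, mul_pow, ← sq_abs (y₁ - y₂)]
      have h : (|(q : ℝ)| * ((B₁ * B₂) ^ 2 * |y₁ - y₂| ^ 2)) * x ^ 22 < δ * x ^ 22 := by
        calc (|(q : ℝ)| * ((B₁ * B₂) ^ 2 * |y₁ - y₂| ^ 2)) * x ^ 22
            = (|(q : ℝ)| * x ^ 6) * (x ^ 4 * B₁) ^ 2 * (x ^ 4 * B₂) ^ 2 * |y₁ - y₂| ^ 2 := by ring
          _ ≤ (65536 ^ 2 * H₁ ^ 2) * H₁ ^ 2 * H₂ ^ 2 * (4 / N) ^ 2 := by gcongr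
          _ = 16 * 65536 ^ 2 / N ^ 2 * (H₁ ^ 4 * H₂ ^ 2) := by field_simp; norm_num
          _ ≤ 16 * 65536 ^ 2 / N ^ 2 * (δ * N * x ^ 8 * 65536 ^ 3) ^ 2 := by gcongr
          _ = (16 * δ * 65536 ^ 8) * (δ * x ^ 16) := by field_simp
          _ < 1 * (δ * x ^ 16) := by
            gcongr
            linarith
          _ = δ * x ^ 16 := one_mul _
          _ ≤ δ * x ^ 22 := by
            gcongr
            norm_num
      exact lt_of_mul_lt_mul_right h (by positivity)
    have h3 := hclass hq0 h1 h2 (r := r)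
    rw [hqy, mul_pow, mul_pow, ← sq_abs (y₁ - y₂), ← sq_abs (A₁ : ℝ)] at h3
    set D := |y₁ - y₂|
    have h4 : δ * x ^ 14 ≤ (65536 ^ 8 * δ) * (δ * x ^ 14) * (N * x * D) ^ 2 := by
      calc δ * x ^ 14 ≤ (|(q : ℝ)| * (|(A₁ : ℝ)| ^ 2 * (B₂ : ℝ) ^ 2 * D ^ 2)) * x ^ 14 := by gcongr
        _ = (|(q : ℝ)| * x ^ 6) * |(A₁ : ℝ)| ^ 2 * (x ^ 4 * B₂) ^ 2 * D ^ 2 := by ring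
        _ ≤ (65536 ^ 2 * H₁ ^ 2) * H₁ ^ 2 * H₂ ^ 2 * D ^ 2 := by gcongr
        _ = 65536 ^ 2 * (H₁ ^ 4 * H₂ ^ 2) * D ^ 2 := by ring
        _ ≤ 65536 ^ 2 * (δ * N * x ^ 8 * 65536 ^ 3) ^ 2 * D ^ 2 := by gcongr
        _ = _ := by ring
    have h5 : δ * x ^ 14 * 1 ≤ δ * x ^ 14 * (N * x * D) ^ 2 := by
      calc δ * x ^ 14 * 1 ≤ (65536 ^ 8 * δ) * (δ * x ^ 14) * (N * x * D) ^ 2 := by linarith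
        _ ≤ 1 * (δ * x ^ 14) * (N * x * D) ^ 2 := by
          gcongr
          linarith
        _ = _ := by ring
    have h6 : 1 ≤ N * x * D := by
      have h7 := le_of_mul_le_mul_left h5 (by positivity)
      by_contra! hlt
      exact absurd h7 (not_le.2 (pow_lt_one₀ (by positivity) hlt (by norm_num)))
    rw [div_le_iff₀ (by positivity)]
    linarith
  · right
    have e : (A₁ : ℝ) / B₁ - A₂ / B₂ = q / (B₁ * B₂) := by
      rw [hq]; push_cast; field_simp
    rw [e, abs_div, abs_of_pos (by positivity : (0 : ℝ) < B₁ * B₂), le_div_iff₀ (by positivity)]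
    have h : (65536 * x ^ 2 * (B₁ * B₂)) * x ^ 6 ≤ |(q : ℝ)| * x ^ 6 := by
      calc (65536 * x ^ 2 * (B₁ * B₂)) * x ^ 6 = 65536 * (x ^ 4 * B₁) * (x ^ 4 * B₂) := by ring
        _ ≤ 65536 * H₁ * H₂ := by gcongr
        _ ≤ 65536 * H₁ * (65536 * H₁) := by gcongr
        _ = 65536 ^ 2 * H₁ ^ 2 := by ring
        _ ≤ _ := hcase
    exact le_of_mul_le_mul_right h (by positivity)

lemma near_parent {m k b a : ℕ} (ha : a ∈ Finset.Ico (b * 65536 ^ (k + 1)) ((b + 1) * 65536 ^ (k + 1)))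
    {z : ℝ} (hz : |z - a / 65536 ^ (m + k + 1)| ≤ 4 / 65536 ^ (m + k + 1)) :
    |z - b / 65536 ^ m| ≤ 2 / 65536 ^ m := by
  rw [Finset.mem_Ico] at ha
  have h1 : (b : ℝ) * 65536 ^ (k + 1) ≤ a := by exact_mod_cast ha.1
  have h2 : (a : ℝ) ≤ (b + 1) * 65536 ^ (k + 1) := by exact_mod_cast ha.2.le
  have hV : (65536 : ℝ) ≤ 65536 ^ (k + 1) := le_self_pow₀ (by norm_num) (by omega)
  rw [add_assoc, pow_add] at hz
  have hN : (0 : ℝ) < 65536 ^ m := by positivity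
  set N : ℝ := 65536 ^ m
  set V : ℝ := 65536 ^ (k + 1)
  have hV0 : 0 < V := by linarith
  have h3 : (b : ℝ) / N ≤ a / (N * V) := by
    rw [div_le_div_iff₀ hN (by positivity)]; nlinarith
  have h4 : (a : ℝ) / (N * V) ≤ b / N + 1 / N := by
    rw [← add_div, div_le_div_iff₀ (by positivity) hN]; nlinarith
  have h5 : 4 / (N * V) ≤ 1 / N := by
    rw [div_le_div_iff₀ (by positivity) hN]; nlinarith
  have h6 : 2 / N = 1 / N + 1 / N := by ring
  have h7 : 0 < 1 / N := by positivity
  rw [abs_le] at hz ⊢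
  constructor <;> linarith [hz.1, hz.2]

lemma floor_mem_Icc {z c N : ℝ} {b : ℕ} {M : ℤ} (hN : 0 < N) (hM : c = N * M) (hc : 0 < c)
    (h : |z - b / N| ≤ 2 / N) : ⌊z * c⌋ ∈ Finset.Icc (M * ((b : ℤ) - 2)) (M * (b + 2)) := by
  have hM0 : (0 : ℝ) < M := by
    rw [hM] at hc
    exact (mul_pos_iff_of_pos_left hN).1 hc
  have e : z * c = (z - b / N) * N * M + M * b := by rw [hM]; field_simp; ring
  have h1 : |(z - b / N) * N| ≤ 2 := by
    rw [abs_mul, abs_of_pos hN]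
    exact (le_div_iff₀ hN).1 h
  rw [abs_le] at h1
  rw [Finset.mem_Icc]
  constructor
  · rw [Int.le_floor, e]; push_cast; nlinarith
  · have : z * c ≤ ((M * (b + 2) : ℤ) : ℝ) := by rw [e]; push_cast; nlinarith
    exact_mod_cast (Int.floor_le _).trans this

lemma abs_sub_lt_of_floor_mul_eq {z w c : ℝ} (hc : 0 < c) (h : ⌊z * c⌋ = ⌊w * c⌋) :
    |z - w| < 1 / c := by
  have := Int.abs_sub_lt_one_of_floor_eq_floor h
  rwa [← sub_mul, abs_mul, abs_of_pos hc, ← lt_div_iff₀ hc] at this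

open Classical in
lemma card_badPoint_le {δ θ : ℝ} (hδ0 : 0 < δ) (hδ : δ * 65536 ^ 12 ≤ 1)
    (hθ : ∀ A C : ℤ, A ≠ 0 → δ ≤ |A * θ + C| * (A : ℝ) ^ 2) {n b : ℕ}
    (hb : b ∈ survivors 65536 (Removed δ θ) n) :
    ((Finset.Ico (b * 65536 ^ (0 + 1)) ((b + 1) * 65536 ^ (0 + 1))).filter
      fun a => BadPoint δ θ n a).card ≤ 2313 := by
  have hex : ∀ a, BadPoint δ θ n a → _ := fun a h => h
  unfold BadPoint at hex
  choose! p r q hq hl hu hs hy using hex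
  have hN : (0 : ℝ) < 65536 ^ n := by positivity
  have hc : (0 : ℝ) < 65536 ^ (n + 1) / 1024 := by positivity
  refine (card_le_of_cells (fun a => ⌊(r a : ℝ) / q a * (65536 ^ (n + 1) / 1024)⌋)
    (Finset.Icc (64 * ((b : ℤ) - 2)) (64 * (b + 2))) ?_ ?_).trans ?_
  · intro a ha
    rw [Finset.mem_filter] at ha
    refine floor_mem_Icc hN ?_ hc (near_parent (m := n) (k := 0) ha.1 (hy a ha.2))
    rw [pow_succ]; push_cast; ring
  · intro a ha a' ha' hcell
    rw [Finset.mem_filter] at ha ha'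
    have hlt := abs_sub_lt_of_floor_mul_eq hc hcell
    rw [one_div_div] at hlt
    have heq : (r a : ℝ) / q a = r a' / q a' := by
      by_contra hne
      exact absurd (point_gap hδ0 hδ hθ hb (hq a ha.2) (hq a' ha'.2) (hl a ha.2) (hu a ha.2)
        (hl a' ha'.2) (hu a' ha'.2) (hs a ha.2) (hs a' ha'.2)
        (near_parent (m := n) (k := 0) ha.1 (hy a ha.2)) hne) (not_le.2 hlt)
    refine le_add_eight_of_near (by positivity) (hy a ha.2) ?_
    rw [heq]
    exact hy a' ha'.2
  · rw [Int.card_Icc]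
    omega

open Classical in
lemma card_badLine_le {δ θ : ℝ} (hδ0 : 0 < δ) (hδ : δ * 65536 ^ 12 ≤ 1) {m k b : ℕ}
    (hb : b ∈ survivors 65536 (Removed δ θ) m) :
    ((Finset.Ico (b * 65536 ^ (k + 1)) ((b + 1) * 65536 ^ (k + 1))).filter
      fun a => BadLine δ θ (m + k) k a).card ≤ 90 * 4096 ^ k := by
  have hex : ∀ a, BadLine δ θ (m + k) k a → _ := fun a h => h
  unfold BadLine at hex
  choose! A B C hB hl hu hk hk' hy using hex
  have hN : (0 : ℝ) < 65536 ^ m := by positivity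
  have hc : (0 : ℝ) < 65536 ^ m * 16 ^ k := by positivity
  have hd : (0 : ℝ) < 1 / (65536 * (16 ^ k) ^ 2) := by positivity
  refine (card_le_of_cells (fun a => (⌊(A a * θ + C a) / B a * (65536 ^ m * 16 ^ k)⌋,
      ⌊(A a : ℝ) / B a * (1 / (65536 * (16 ^ k) ^ 2))⌋))
    (Finset.Icc (16 ^ k * ((b : ℤ) - 2)) (16 ^ k * (b + 2)) ×ˢ
      Finset.Ico (-(16 ^ k) ^ 2) ((16 ^ k) ^ 2)) ?_ ?_).trans ?_
  · intro a ha
    rw [Finset.mem_filter] at ha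
    rw [Finset.mem_product]
    refine ⟨floor_mem_Icc hN (by push_cast; ring) hc
      (near_parent ha.1 (hy a ha.2)), ?_⟩
    have hB' : (0 : ℝ) < B a := by exact_mod_cast hB a ha.2
    have h1 : |(A a : ℝ)| < 65536 * (16 ^ k) ^ 4 * B a :=
      (le_max_left _ _).trans_lt (hk' a ha.2)
    have h2 : |(A a : ℝ) / B a * (1 / (65536 * (16 ^ k) ^ 2))| < (16 ^ k) ^ 2 := by
      rw [abs_mul, abs_div, abs_of_pos hB', abs_of_pos hd, mul_one_div, div_div,
        div_lt_iff₀ (by positivity)]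
      linarith
    rw [abs_lt] at h2
    rw [Finset.mem_Ico, Int.le_floor, Int.floor_lt]
    push_cast
    exact ⟨by linarith, by linarith⟩
  · intro a ha a' ha' hcell
    rw [Finset.mem_filter] at ha ha'
    obtain ⟨hc1, hc2⟩ := Prod.mk.inj hcell
    have hlt1 := abs_sub_lt_of_floor_mul_eq hc hc1
    have hlt2 := abs_sub_lt_of_floor_mul_eq hd hc2
    rw [one_div_one_div] at hlt2
    have heq : (A a * θ + C a) / B a = (A a' * θ + C a') / B a' := by
      by_contra hne
      rcases line_gap hδ0 hδ hb (hB a ha.2) (hB a' ha'.2) (le_max_left _ _)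
        (hl a ha.2) (hu a ha.2) (hu a' ha'.2) (hk a ha.2) (hk' a ha.2) (hk a' ha'.2) (hk' a' ha'.2)
        (near_parent ha.1 (hy a ha.2)) (near_parent ha'.1 (hy a' ha'.2)) hne with h | h
      · exact absurd h (not_le.2 hlt1)
      · exact absurd h (not_le.2 hlt2)
    refine le_add_eight_of_near (by positivity) (hy a ha.2) ?_
    rw [heq]
    exact hy a' ha'.2
  · rw [Finset.card_product, Int.card_Icc, Int.card_Ico]
    have hx : (1 : ℕ) ≤ 16 ^ k := Nat.one_le_pow _ _ (by norm_num)
    have e1 : ((16 : ℤ) ^ k * (b + 2) + 1 - 16 ^ k * (b - 2)).toNat = 4 * 16 ^ k + 1 := by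
      have : (16 : ℤ) ^ k * (b + 2) + 1 - 16 ^ k * (b - 2) = ((4 * 16 ^ k + 1 : ℕ) : ℤ) := by
        push_cast; ring
      rw [this, Int.toNat_natCast]
    have e2 : (((16 : ℤ) ^ k) ^ 2 - -((16 : ℤ) ^ k) ^ 2).toNat = 2 * (16 ^ k) ^ 2 := by
      have : ((16 : ℤ) ^ k) ^ 2 - -((16 : ℤ) ^ k) ^ 2 = ((2 * (16 ^ k) ^ 2 : ℕ) : ℤ) := by
        push_cast; ring
      rw [this, Int.toNat_natCast]
    have e3 : (4096 : ℕ) ^ k = (16 ^ k) ^ 3 := by rw [← pow_mul, mul_comm, pow_mul]; norm_num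
    rw [e1, e2, e3]
    generalize 16 ^ k = x at hx
    calc 9 * ((4 * x + 1) * (2 * x ^ 2)) ≤ 9 * ((4 * x + x) * (2 * x ^ 2)) := by gcongr
      _ = 90 * x ^ 3 := by ring

open Classical in
lemma card_removed_le {δ θ : ℝ} (hδ0 : 0 < δ) (hδ : δ * 65536 ^ 12 ≤ 1)
    (hθ : ∀ A C : ℤ, A ≠ 0 → δ ≤ |A * θ + C| * (A : ℝ) ^ 2) {m k b : ℕ}
    (hb : b ∈ survivors 65536 (Removed δ θ) m) :
    ((Finset.Ico (b * 65536 ^ (k + 1)) ((b + 1) * 65536 ^ (k + 1))).filter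
      fun a => Removed δ θ (m + k) k a).card ≤ 2403 * 4096 ^ k := by
  set s := Finset.Ico (b * 65536 ^ (k + 1)) ((b + 1) * 65536 ^ (k + 1))
  have hsub : s.filter (fun a => Removed δ θ (m + k) k a) ⊆
      s.filter (fun a => BadLine δ θ (m + k) k a) ∪
        s.filter (fun a => k = 0 ∧ BadPoint δ θ (m + k) a) := by
    intro a ha
    rw [Finset.mem_filter] at ha
    exact Finset.mem_union.2 (ha.2.imp (fun h => Finset.mem_filter.2 ⟨ha.1, h⟩)
      fun h => Finset.mem_filter.2 ⟨ha.1, h⟩)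
  refine (Finset.card_le_card hsub).trans ((Finset.card_union_le _ _).trans ?_)
  have h1 : (s.filter fun a => BadLine δ θ (m + k) k a).card ≤ 90 * 4096 ^ k :=
    card_badLine_le hδ0 hδ hb
  have h2 : (s.filter fun a => k = 0 ∧ BadPoint δ θ (m + k) a).card ≤ 2313 := by
    rcases Nat.eq_zero_or_pos k with rfl | hk
    · simpa only [true_and, add_zero] using card_badPoint_le hδ0 hδ hθ hb
    · simp [hk.ne']
  have : 0 < 4096 ^ k := by positivity
  omega

lemma sum_removed_le (n : ℕ) :
    ∑ k ∈ Finset.range (n + 1), (2403 * 4096 ^ k : ℝ) * (2 / (65536 : ℕ)) ^ k ≤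
      (65536 : ℕ) / 2 := by
  have e : ∀ k ∈ Finset.range (n + 1), (2403 * 4096 ^ k : ℝ) * (2 / (65536 : ℕ)) ^ k =
      2403 * (1 / 8) ^ k := by
    intro k _
    rw [mul_assoc, ← mul_pow]
    norm_num
  rw [Finset.sum_congr rfl e, ← Finset.mul_sum]
  have h : ∑ k ∈ Finset.range (n + 1), (1 / 8 : ℝ) ^ k ≤ 2 := by
    rw [geom_sum_eq (by norm_num)]
    have : (0 : ℝ) < (1 / 8) ^ (n + 1) := by positivity
    rw [div_le_iff_of_neg (by norm_num)]
    linarith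
  push_cast
  linarith

/-- Quantitative version of Badziahin–Pollington–Velani. -/
theorem stmt2 (δ : ℝ) (hδ0 : 0 < δ) (hδ : δ ≤ 1 / 2 ^ 1622) (θ₁ : ℝ)
    (hθ₁ : ∀ q : ℕ, 0 < q → δ ≤ (q : ℝ) ^ 2 * nint (q * θ₁)) :
    ∃ θ₂ : ℝ,
      (∀ A B : ℤ, 0 < max |A| |B| →
        δ ≤ nint (A * θ₁ - B * θ₂) * max ((A : ℝ) ^ 2) ((B : ℝ) ^ 2)) ∧
      (∃ c : ℝ, 0 < c ∧ ∀ q : ℕ, 0 < q →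
        c ≤ Real.sqrt q * max (nint (q * θ₁)) (nint (q * θ₂))) := by
  have hδ' : δ * 65536 ^ 12 ≤ 1 := by
    have h : (1 : ℝ) / 2 ^ 1622 ≤ 1 / 2 ^ 192 :=
      one_div_le_one_div_of_le (by positivity) (pow_le_pow_right₀ (by norm_num) (by norm_num))
    have h2 := hδ.trans h
    rw [le_div_iff₀ (by positivity)] at h2
    have e : (65536 : ℝ) ^ 12 = 2 ^ 192 := by norm_num
    rwa [e]
  clear hδ
  have hθ : ∀ A C : ℤ, A ≠ 0 → δ ≤ |A * θ₁ + C| * (A : ℝ) ^ 2 := by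
    have hpos : ∀ A C : ℤ, 0 < A → δ ≤ |A * θ₁ + C| * (A : ℝ) ^ 2 := by
      intro A C hA
      lift A to ℕ using hA.le
      have h := hθ₁ A (by exact_mod_cast hA)
      have h2 := round_le (A * θ₁) (-C)
      push_cast at h2 ⊢
      rw [sub_neg_eq_add] at h2
      rw [mul_comm]
      refine h.trans ?_
      unfold nint
      gcongr
    intro A C hA
    rcases lt_or_gt_of_ne hA with h | h
    · have := hpos (-A) (-C) (by omega)
      push_cast at this
      rw [neg_sq, ← abs_neg] at this
      convert this using 3
      ring
    · exact hpos A C h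
  have hgrow := card_survivors_growth (R := 65536) (by norm_num) (Bad := Removed δ θ₁)
    (M := fun k => 2403 * 4096 ^ k)
    (fun m k b hb => by exact_mod_cast card_removed_le hδ0 hδ' hθ hb) sum_removed_le
  obtain ⟨y, hy⟩ := exists_forall_mem_survivors (by norm_num)
    (survivors_nonempty (by norm_num) hgrow)
  have hnear : ∀ n, ∃ b ∈ survivors 65536 (Removed δ θ₁) n,
      |y - b / 65536 ^ n| ≤ 2 / 65536 ^ n := by
    intro n
    obtain ⟨b, hb, h⟩ := hy n
    push_cast at h
    exact ⟨b, hb, h.trans (by gcongr; norm_num)⟩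
  have hlarge : ∀ t : ℝ, ∃ n : ℕ, t < δ * 65536 ^ n := by
    intro t
    obtain ⟨n, hn⟩ := pow_unbounded_of_one_lt (t / δ) (by norm_num : (1 : ℝ) < 65536)
    rw [div_lt_iff₀ hδ0] at hn
    exact ⟨n, by linarith⟩
  refine ⟨y, fun A B hAB => ?_, Real.sqrt δ, Real.sqrt_pos.2 hδ0, fun q hq => ?_⟩
  · have e : nint (A * θ₁ - B * y) = |A * θ₁ - B * y + (-round (A * θ₁ - B * y) : ℤ)| := by
      unfold nint; push_cast; ring_nf
    rw [e]
    have esq : max ((A : ℝ) ^ 2) ((B : ℝ) ^ 2) = max |(A : ℝ)| |(B : ℝ)| ^ 2 := by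
      rcases le_total |(A : ℝ)| |(B : ℝ)| with h | h
      · rw [max_eq_right h, max_eq_right (sq_le_sq.2 h), sq_abs]
      · rw [max_eq_left h, max_eq_left (sq_le_sq.2 h), sq_abs]
    by_cases hB : B = 0
    · have hA : A ≠ 0 := by
        rintro rfl
        simp [hB] at hAB
      refine (hθ A (-round (A * θ₁ - B * y)) hA).trans ?_
      rw [hB]
      simp only [Int.cast_zero, zero_mul, sub_zero]
      gcongr
      exact le_max_left _ _
    · rw [esq]
      obtain ⟨n, hn⟩ := hlarge (|(B : ℝ)| * max |(A : ℝ)| |(B : ℝ)| ^ 2)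
      obtain ⟨b, hb, hyb⟩ := hnear n
      refine le_line_of_mem_survivors hδ0 hδ' hb hyb hB (hn.trans ?_)
      gcongr <;> norm_num
  · obtain ⟨n, hn⟩ := hlarge ((q : ℝ) ^ 3)
    obtain ⟨b, hb, hyb⟩ := hnear n
    have hq' : (0 : ℝ) < q := by exact_mod_cast hq
    have hfin : ∀ x : ℝ, δ ≤ q * (q * x - (round (q * x) : ℤ)) ^ 2 →
        Real.sqrt δ ≤ Real.sqrt q * nint (q * x) := by
      intro x hx
      have h := Real.sqrt_le_sqrt hx
      rwa [Real.sqrt_mul hq'.le, Real.sqrt_sq_eq_abs] at h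
    rcases le_or_gt δ (q * (q * θ₁ - (round (q * θ₁) : ℤ)) ^ 2) with h | h
    · refine (hfin _ h).trans ?_
      gcongr
      exact le_max_left _ _
    · have h2 := le_point_of_pos_of_mem_survivors hδ0 hδ' hb hyb (p := round (q * θ₁))
        (r := round (q * y)) (q := q) (by exact_mod_cast hq)
        (by
          push_cast
          refine hn.trans ?_
          gcongr
          · norm_num
          · omega)
        (by exact_mod_cast h)
      refine (hfin y (by exact_mod_cast h2)).trans ?_
      gcongr
      exact le_max_right _ _
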